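/- The special value ζ₂(4,1,1,1,1,1; G₂) equals (1/18)·ζ(4)·ζ(5) + (145/648)·ζ(2)·ζ(7) − (19753/46656)·ζ(9). -/

import Mathlib

/-- The zeta-function of the root system `G₂` at a tuple of natural number exponents:
`ζ₂(s₁,…,s₆;G₂) = ∑_{m,n≥1} 1/(m^{s₁} n^{s₂} (m+n)^{s₃} (m+2n)^{s₄} (m+3n)^{s₅} (2m+3n)^{s₆})`. -/
noncomputable def zetaG2 (s₁ s₂ s₃ s₄ s₅ s₆ : ℕ) : ℝ :=
  ∑' (m : ℕ+) (n : ℕ+),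
    1 / (((m : ℕ) : ℝ) ^ s₁ * ((n : ℕ) : ℝ) ^ s₂ * (((m : ℕ) : ℝ) + ((n : ℕ) : ℝ)) ^ s₃ *
      (((m : ℕ) : ℝ) + 2 * ((n : ℕ) : ℝ)) ^ s₄ * (((m : ℕ) : ℝ) + 3 * ((n : ℕ) : ℝ)) ^ s₅ *
      (2 * ((m : ℕ) : ℝ) + 3 * ((n : ℕ) : ℝ)) ^ s₆)

noncomputable def gG (m n : ℤ) : ℝ :=
  1 / ((m : ℝ) ^ 4 * n * (m + n) * (m + 2 * n) * (m + 3 * n) * (2 * m + 3 * n))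

/-- The elementary difference `1/(2m+k) - 1/(2m)`, with the convention `1/0 = 0`. -/
noncomputable def gF (k m : ℤ) : ℝ := (((2 * m + k : ℤ) : ℝ))⁻¹ - (((2 * m : ℤ) : ℝ))⁻¹

lemma gF_summable (k : ℤ) : Summable (gF k) := by
  have hs : Summable (fun m : ℤ => ((|k| * (1 + |k|) : ℤ) : ℝ) * (1 / (m : ℝ) ^ 2)) :=
    (Real.summable_one_div_int_pow.mpr (by norm_num)).mul_left _
  refine Summable.of_norm_bounded_eventually hs ?_
  have h0 : ∀ᶠ m : ℤ in Filter.cofinite, m ≠ 0 := by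
    exact (Set.finite_singleton (0:ℤ)).subset (fun x hx => by simpa using hx)
  filter_upwards [h0] with m hm
  have hmR : (m : ℝ) ≠ 0 := by exact_mod_cast hm
  unfold gF
  by_cases hk : 2 * m + k = 0
  · have hk' : k = -2 * m := by linarith
    subst hk'
    have e : 2 * m + -2 * m = 0 := by ring
    rw [e]
    have h1 : (1:ℝ) ≤ |(m:ℝ)| := by exact_mod_cast Int.one_le_abs hm
    have hp : 0 < |(m:ℝ)| := by linarith
    rw [Real.norm_eq_abs]
    push_cast
    rw [← sq_abs (m : ℝ)]
    simp only [inv_zero, zero_sub, abs_neg, abs_inv, abs_mul, Nat.abs_ofNat]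
    rw [mul_one_div, inv_eq_one_div, div_le_div_iff₀ (by positivity) (by positivity)]
    nlinarith [sq_nonneg |(m:ℝ)|, mul_pos hp hp]
  · have hkR : (2 * (m:ℝ) + k) ≠ 0 := by exact_mod_cast hk
    have h1 : (1:ℝ) ≤ |2 * (m:ℝ) + k| := by exact_mod_cast Int.one_le_abs hk
    have h2 : 2 * |(m:ℝ)| ≤ |2 * (m:ℝ) + k| + |(k:ℝ)| := by
      have := abs_sub (2 * (m:ℝ) + k) k
      rw [add_sub_cancel_right, abs_mul] at this
      simpa using this
    have hk0 : 0 ≤ |(k:ℝ)| := abs_nonneg _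
    have h3 : 2 * |(m:ℝ)| ≤ (1 + |(k:ℝ)|) * |2 * (m:ℝ) + k| := by nlinarith
    have hp : 0 < |(m:ℝ)| := abs_pos.mpr hmR
    have hp2 : 0 < |2 * (m:ℝ) + k| := by linarith
    push_cast
    have e : (2 * (m:ℝ) + k)⁻¹ - (2 * (m:ℝ))⁻¹ = - k / (2 * m * (2 * m + k)) := by
      field_simp
      ring
    rw [e, Real.norm_eq_abs, abs_div, abs_neg, abs_mul, abs_mul, ← sq_abs (m:ℝ), mul_one_div,
      div_le_div_iff₀ (by positivity) (by positivity), Nat.abs_ofNat]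
    have h4 : |(m:ℝ)| ^ 2 ≤ (1 + |(k:ℝ)|) * (2 * |(m:ℝ)| * |2 * (m:ℝ) + k|) := by
      nlinarith [mul_le_mul_of_nonneg_left h3 hp.le, sq_nonneg |(m:ℝ)|]
    calc |(k:ℝ)| * |(m:ℝ)| ^ 2 ≤ |(k:ℝ)| * ((1 + |(k:ℝ)|) * (2 * |(m:ℝ)| * |2 * (m:ℝ) + k|)) :=
          mul_le_mul_of_nonneg_left h4 hk0
      _ = _ := by ring

lemma gF_step (k : ℤ) : ∑' m, gF (k + 2) m = ∑' m, gF k m := by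
  have hs := (gF_summable (k + 2)).sub (gF_summable k)
  have h := hs.hasSum
  rw [(gF_summable (k + 2)).tsum_sub (gF_summable k)] at h
  let u : ℤ → ℝ := fun m => (((2 * m + k : ℤ) : ℝ))⁻¹
  have hu : ∀ m, gF (k + 2) m - gF k m = u (m + 1) - u m := by
    intro m
    simp only [gF, u]
    have : 2 * m + (k + 2) = 2 * (m + 1) + k := by ring
    rw [this]
    ring
  simp only [hu] at h
  have hpart : ∀ N : ℕ, ∑ m ∈ Finset.Ico (-(N:ℤ)) N, (u (m + 1) - u m) = u N - u (-N) := by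
    intro N
    induction N with
    | zero => simp
    | succ N ih =>
      have e : Finset.Ico (-((N + 1 : ℕ):ℤ)) ((N + 1 : ℕ) : ℤ) =
          insert (-((N:ℤ) + 1)) (insert (N:ℤ) (Finset.Ico (-(N:ℤ)) N)) := by
        ext x
        simp only [Finset.mem_Ico, Finset.mem_insert]
        push_cast
        omega
      rw [e, Finset.sum_insert (by simp only [Finset.mem_insert, Finset.mem_Ico]; omega),
        Finset.sum_insert (by simp), ih]
      push_cast
      have : -((N:ℤ) + 1) + 1 = -N := by ring
      rw [this]
      ring
  have htop : Filter.Tendsto (fun N : ℕ => Finset.Ico (-(N:ℤ)) N) Filter.atTop Filter.atTop := by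
    refine Filter.tendsto_atTop_finset_of_monotone ?_ ?_
    · intro a b hab x
      simp only [Finset.mem_Ico]
      omega
    · intro x
      refine ⟨x.natAbs + 1, ?_⟩
      simp only [Finset.mem_Ico]
      omega
  have hl := h.comp htop
  have hinj : Function.Injective (fun m : ℤ => 2 * m + k) := by
    intro a b hab
    simp only at hab
    omega
  have hu0 : Filter.Tendsto u Filter.cofinite (nhds 0) := by
    have h1 : Filter.Tendsto (fun z : ℤ => ((z : ℝ))⁻¹) Filter.cofinite (nhds 0) := by
      have := (Real.summable_one_div_int_pow (p := 2)).mpr (by norm_num)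
      have h2 := this.tendsto_cofinite_zero
      have h3 := (Real.continuous_sqrt.tendsto 0).comp h2
      rw [Real.sqrt_zero] at h3
      rw [tendsto_zero_iff_norm_tendsto_zero]
      refine h3.congr ?_
      intro z
      simp [Real.sqrt_sq_eq_abs]
    exact h1.comp hinj.tendsto_cofinite
  have hc1 : Filter.Tendsto (fun N : ℕ => u N) Filter.atTop (nhds 0) := by
    rw [← Nat.cofinite_eq_atTop]
    exact hu0.comp (Nat.cast_injective (R := ℤ)).tendsto_cofinite
  have hc2 : Filter.Tendsto (fun N : ℕ => u (-N)) Filter.atTop (nhds 0) := by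
    rw [← Nat.cofinite_eq_atTop]
    exact hu0.comp (Function.Injective.tendsto_cofinite
      (f := fun N : ℕ => (-(N:ℤ))) (by intro a b hab; simpa using hab))
  have hl2 : Filter.Tendsto (fun N : ℕ => u N - u (-N)) Filter.atTop (nhds 0) := by
    simpa using hc1.sub hc2
  have := tendsto_nhds_unique hl (hl2.congr (fun N => (hpart N).symm))
  linarith

lemma gF_steps (k : ℤ) (j : ℕ) : ∑' m, gF (k + 2 * j) m = ∑' m, gF k m := by
  induction j with
  | zero => simp
  | succ j ih =>
    rw [← ih, ← gF_step (k + 2 * j)]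
    congr! 3
    push_cast
    ring

lemma gF_neg (k : ℤ) : ∑' m, gF (-k) m = - ∑' m, gF k m := by
  rw [← tsum_neg, ← (Equiv.neg ℤ).tsum_eq]
  congr 1
  ext m
  simp only [gF, Equiv.neg_apply]
  push_cast
  have e1 : 2 * -(m:ℝ) + -k = -(2 * m + k) := by ring
  have e2 : 2 * -(m:ℝ) = -(2 * m) := by ring
  rw [e1, e2, inv_neg, inv_neg]
  ring

lemma gF_hasSum (k : ℕ) : HasSum (gF k) 0 := by
  have h := (gF_summable k).hasSum
  have h1 := gF_steps (-k) k
  have h2 := gF_neg k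
  have e : -(k:ℤ) + 2 * k = k := by ring
  rw [e] at h1
  have : ∑' m, gF k m = 0 := by linarith
  rwa [this] at h

lemma gG_refl (m n : ℤ) : gG m (-m - n) = - gG m n := by
  unfold gG
  push_cast
  rw [← one_div_neg_eq_neg_one_div]
  congr 1
  ring

lemma gG_neg (m n : ℤ) : gG (-m) n = - gG m (-n) := by
  unfold gG
  push_cast
  rw [← one_div_neg_eq_neg_one_div]
  congr 1
  ring

lemma gG_zero_left (n : ℤ) : gG 0 n = 0 := by simp [gG]
lemma gG_zero_right (m : ℤ) : gG m 0 = 0 := by simp [gG]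

lemma gG_bound (m n : ℤ) : ‖gG m n‖ ≤ 2 * (1 / (m:ℝ) ^ 4 * (1 / (n:ℝ) ^ 2)) := by
  have hnn : 0 ≤ 2 * (1 / (m:ℝ) ^ 4 * (1 / (n:ℝ) ^ 2)) := by positivity
  by_cases h0 : m = 0
  · subst h0; rw [gG_zero_left, norm_zero]; exact hnn
  by_cases h1 : n = 0
  · subst h1; rw [gG_zero_right, norm_zero]; exact hnn
  by_cases h2 : m + n = 0
  · have : (m:ℝ) + n = 0 := by exact_mod_cast h2
    simpa [gG, this] using hnn
  by_cases h3 : m + 2 * n = 0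
  · have : (m:ℝ) + 2 * n = 0 := by exact_mod_cast h3
    simpa [gG, this] using hnn
  by_cases h4 : m + 3 * n = 0
  · have : (m:ℝ) + 3 * n = 0 := by exact_mod_cast h4
    simpa [gG, this] using hnn
  by_cases h5 : 2 * m + 3 * n = 0
  · have : 2 * (m:ℝ) + 3 * n = 0 := by exact_mod_cast h5
    simpa [gG, this] using hnn
  have a0 : (1:ℝ) ≤ |(m:ℝ)| := by exact_mod_cast Int.one_le_abs h0
  have a1 : (1:ℝ) ≤ |(n:ℝ)| := by exact_mod_cast Int.one_le_abs h1
  have a2 : (1:ℝ) ≤ |(m:ℝ) + n| := by exact_mod_cast Int.one_le_abs h2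
  have a3 : (1:ℝ) ≤ |(m:ℝ) + 2 * n| := by exact_mod_cast Int.one_le_abs h3
  have a4 : (1:ℝ) ≤ |(m:ℝ) + 3 * n| := by exact_mod_cast Int.one_le_abs h4
  have a5 : (1:ℝ) ≤ |2 * (m:ℝ) + 3 * n| := by exact_mod_cast Int.one_le_abs h5
  have b : |(n:ℝ)| ≤ |(m:ℝ) + 2 * n| + |(m:ℝ) + 3 * n| := by
    have := abs_sub ((m:ℝ) + 3 * n) (m + 2 * n)
    have e : (m:ℝ) + 3 * n - (m + 2 * n) = n := by ring
    rw [e] at this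
    linarith
  have c : |(n:ℝ)| ≤ 2 * (|(m:ℝ) + 2 * n| * |(m:ℝ) + 3 * n|) := by nlinarith
  have d : 1 ≤ |(m:ℝ) + n| * |2 * (m:ℝ) + 3 * n| := by nlinarith
  have key : |(n:ℝ)| ^ 2 ≤ 2 * (|(n:ℝ)| * |(m:ℝ) + n| * |(m:ℝ) + 2 * n| * |(m:ℝ) + 3 * n| *
      |2 * (m:ℝ) + 3 * n|) := by
    calc |(n:ℝ)| ^ 2 = |(n:ℝ)| * |(n:ℝ)| * 1 := by ring
      _ ≤ |(n:ℝ)| * (2 * (|(m:ℝ) + 2 * n| * |(m:ℝ) + 3 * n|)) *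
          (|(m:ℝ) + n| * |2 * (m:ℝ) + 3 * n|) := by gcongr
      _ = _ := by ring
  unfold gG
  rw [Real.norm_eq_abs, abs_div, abs_one, abs_mul, abs_mul, abs_mul, abs_mul, abs_mul, abs_pow,
    one_div_mul_one_div, mul_one_div, ← sq_abs (n:ℝ)]
  have e4 : (m:ℝ) ^ 4 = |(m:ℝ)| ^ 4 := by
    rw [show 4 = 2 * 2 by norm_num, pow_mul, pow_mul, sq_abs]
  rw [e4, div_le_div_iff₀ (by positivity) (by positivity)]
  have hm4 : 0 ≤ |(m:ℝ)| ^ 4 := by positivity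
  nlinarith [mul_le_mul_of_nonneg_left key hm4]

lemma gG_summable : Summable (fun p : ℤ × ℤ => gG p.1 p.2) := by
  have h4 : Summable (fun m : ℤ => 1 / (m:ℝ) ^ 4) :=
    Real.summable_one_div_int_pow.mpr (by norm_num)
  have h2 : Summable (fun m : ℤ => 1 / (m:ℝ) ^ 2) :=
    Real.summable_one_div_int_pow.mpr (by norm_num)
  have h := (h4.mul_of_nonneg h2 (fun m => by positivity) (fun m => by positivity)).mul_left 2
  exact Summable.of_norm_bounded h (fun p => gG_bound p.1 p.2)

/-- The correction constants at the degenerate points. -/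
noncomputable def gC (m n : ℤ) : ℝ :=
  (if m = 0 then 8281 / 23328 * (1 / (n:ℝ) ^ 9) else 0)
  + (if m = -n then 1 / 4 * (1 / (n:ℝ) ^ 9) else 0)
  + (if m = -2 * n then 1 / 4 * (1 / (n:ℝ) ^ 9) else 0)
  + (if m = -3 * n then -7 / 972 * (1 / (n:ℝ) ^ 9) else 0)
  + (if 2 * m = -3 * n then -128 / 243 * (1 / (n:ℝ) ^ 9) else 0)

lemma gG_pf (m n : ℤ) (hn : n ≠ 0) :
    gG m n = 1 / 18 * (1 / (n:ℝ) ^ 5) * (1 / (m:ℝ) ^ 4) - 5 / 36 * (1 / (n:ℝ) ^ 6) * (1 / (m:ℝ) ^ 3)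
      + 145 / 648 * (1 / (n:ℝ) ^ 7) * (1 / (m:ℝ) ^ 2)
      + (1 / (n:ℝ) ^ 8) * (gF (2 * n) m + 1 / 8 * gF (4 * n) m - 1 / 243 * gF (6 * n) m
        - 128 / 243 * gF (3 * n) m) - gC m n := by
  have hnR : (n:ℝ) ≠ 0 := by exact_mod_cast hn
  by_cases h0 : m = 0
  · subst h0
    rw [gG_zero_left]
    have c1 : ¬ (0 = -n) := by omega
    have c2 : ¬ (0 = -2 * n) := by omega
    have c3 : ¬ (0 = -3 * n) := by omega
    have c4 : ¬ (2 * 0 = -3 * n) := by omega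
    simp only [gC, gF, if_true, if_neg c1, if_neg c2, if_neg c3, if_neg c4]
    push_cast
    simp only [mul_zero, zero_add, inv_zero]
    norm_num
    field_simp
    ring
  have h0R : (m:ℝ) ≠ 0 := by exact_mod_cast h0
  by_cases h1 : m = -n
  · subst h1
    have c2 : ¬ (-n = -2 * n) := by omega
    have c3 : ¬ (-n = -3 * n) := by omega
    have c4 : ¬ (2 * -n = -3 * n) := by omega
    simp only [gG, gC, gF, if_true, if_neg h0, if_neg c2, if_neg c3, if_neg c4]
    push_cast
    have e1 : 2 * -(n:ℝ) + 2 * n = 0 := by ring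
    have e2 : 2 * -(n:ℝ) + 4 * n = 2 * n := by ring
    have e3 : 2 * -(n:ℝ) + 6 * n = 4 * n := by ring
    have e4 : 2 * -(n:ℝ) + 3 * n = n := by ring
    have e5 : -(n:ℝ) + n = 0 := by ring
    rw [e1, e2, e3, e4, e5]
    simp only [mul_zero, zero_mul, inv_zero, div_zero]
    field_simp
    ring
  by_cases h2 : m = -2 * n
  · subst h2
    have c3 : ¬ (-2 * n = -3 * n) := by omega
    have c4 : ¬ (2 * (-2 * n) = -3 * n) := by omega
    simp only [gG, gC, gF, if_true, if_neg h0, if_neg h1, if_neg c3, if_neg c4]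
    push_cast
    have e1 : 2 * (-2 * (n:ℝ)) + 2 * n = -2 * n := by ring
    have e2 : 2 * (-2 * (n:ℝ)) + 4 * n = 0 := by ring
    have e3 : 2 * (-2 * (n:ℝ)) + 6 * n = 2 * n := by ring
    have e4 : 2 * (-2 * (n:ℝ)) + 3 * n = -n := by ring
    have e5 : (-2 * (n:ℝ)) + 2 * n = 0 := by ring
    rw [e1, e2, e3, e4, e5]
    simp only [mul_zero, zero_mul, inv_zero, div_zero]
    field_simp
    ring
  by_cases h3 : m = -3 * n
  · subst h3
    have c4 : ¬ (2 * (-3 * n) = -3 * n) := by omega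
    simp only [gG, gC, gF, if_true, if_neg h0, if_neg h1, if_neg h2, if_neg c4]
    push_cast
    have e1 : 2 * (-3 * (n:ℝ)) + 2 * n = -4 * n := by ring
    have e2 : 2 * (-3 * (n:ℝ)) + 4 * n = -2 * n := by ring
    have e3 : 2 * (-3 * (n:ℝ)) + 6 * n = 0 := by ring
    have e4 : 2 * (-3 * (n:ℝ)) + 3 * n = -3 * n := by ring
    have e5 : (-3 * (n:ℝ)) + 3 * n = 0 := by ring
    rw [e1, e2, e3, e4, e5]
    simp only [mul_zero, zero_mul, inv_zero, div_zero]
    field_simp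
    ring
  by_cases h4 : 2 * m = -3 * n
  · simp only [gG, gC, gF, if_neg h0, if_neg h1, if_neg h2, if_neg h3, if_pos h4]
    have h4R : 2 * (m:ℝ) = -3 * n := by exact_mod_cast h4
    have hm : (m:ℝ) = -3 / 2 * n := by linarith
    push_cast
    rw [hm]
    have e1 : 2 * (-3 / 2 * (n:ℝ)) + 2 * n = - n := by ring
    have e2 : 2 * (-3 / 2 * (n:ℝ)) + 4 * n = n := by ring
    have e3 : 2 * (-3 / 2 * (n:ℝ)) + 6 * n = 3 * n := by ring
    have e4 : 2 * (-3 / 2 * (n:ℝ)) + 3 * n = 0 := by ring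
    rw [e1, e2, e3, e4]
    simp only [mul_zero, zero_mul, inv_zero, div_zero]
    field_simp
    ring
  simp only [gG, gC, gF, if_neg h0, if_neg h1, if_neg h2, if_neg h3, if_neg h4]
  push_cast
  have r1 : (m:ℝ) + n ≠ 0 := by
    have : m + n ≠ 0 := by omega
    exact_mod_cast this
  have r2 : (m:ℝ) + 2 * n ≠ 0 := by
    have : m + 2 * n ≠ 0 := by omega
    exact_mod_cast this
  have r3 : (m:ℝ) + 3 * n ≠ 0 := by
    have : m + 3 * n ≠ 0 := by omega
    exact_mod_cast this
  have r4 : 2 * (m:ℝ) + 3 * n ≠ 0 := by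
    have : 2 * m + 3 * n ≠ 0 := by omega
    exact_mod_cast this
  have e1 : 2 * (m:ℝ) + 2 * n = 2 * (m + n) := by ring
  have e2 : 2 * (m:ℝ) + 4 * n = 2 * (m + 2 * n) := by ring
  have e3 : 2 * (m:ℝ) + 6 * n = 2 * (m + 3 * n) := by ring
  rw [e1, e2, e3]
  obtain ⟨a, ha⟩ : ∃ a, a = (m:ℝ) + n := ⟨_, rfl⟩
  obtain ⟨b, hb⟩ : ∃ b, b = (m:ℝ) + 2 * n := ⟨_, rfl⟩
  obtain ⟨c, hc⟩ : ∃ c, c = (m:ℝ) + 3 * n := ⟨_, rfl⟩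
  obtain ⟨d, hd⟩ : ∃ d, d = 2 * (m:ℝ) + 3 * n := ⟨_, rfl⟩
  rw [← ha] at r1
  rw [← hb] at r2
  rw [← hc] at r3
  rw [← hd] at r4
  rw [← ha, ← hb, ← hc, ← hd]
  field_simp
  rw [ha, hb, hc, hd]
  ring

/-- Splitting a sum over the integers. -/
lemma tsum_int_split (g : ℤ → ℝ) (hg : Summable g) (h0 : g 0 = 0) :
    ∑' z, g z = ∑' n : ℕ+, g ((n:ℕ):ℤ) + ∑' n : ℕ+, g (-((n:ℕ):ℤ)) := by
  have h := tsum_of_nat_of_neg_add_one (f := g)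
    (hg.comp_injective (Nat.cast_injective (R := ℤ)))
    (hg.comp_injective (i := fun n : ℕ => -((n:ℤ) + 1)) (by intro a b hab; simpa using hab))
  rw [h, tsum_pnat_eq_tsum_succ (f := fun n : ℕ => g n),
    tsum_pnat_eq_tsum_succ (f := fun n : ℕ => g (-(n:ℤ)))]
  rw [(hg.comp_injective (Nat.cast_injective (R := ℤ))).tsum_eq_zero_add (f := fun n : ℕ => g n)]
  simp [h0]

/-- Real zeta values as sums over positive naturals. -/
noncomputable def gZ (k : ℕ) : ℝ := ∑' n : ℕ+, 1 / ((n:ℕ):ℝ) ^ k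

lemma gZ_summable (k : ℕ) (hk : 1 < k) : Summable (fun n : ℕ+ => 1 / ((n:ℕ):ℝ) ^ k) :=
  (Real.summable_one_div_nat_pow.mpr hk).comp_injective PNat.coe_injective

lemma gZ_eq (k : ℕ) (hk : 1 < k) : ((gZ k : ℝ) : ℂ) = riemannZeta k := by
  have h : gZ k = ∑' n : ℕ, 1 / (n:ℝ) ^ k := by
    rw [gZ, tsum_pnat_eq_tsum_succ (f := fun n : ℕ => 1 / (n:ℝ) ^ k),
      (Real.summable_one_div_nat_pow.mpr hk).tsum_eq_zero_add]
    have : k ≠ 0 := by omega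
    simp [this]
  rw [zeta_nat_eq_tsum_of_gt_one hk, h, Complex.ofReal_tsum]
  push_cast
  rfl

lemma int_even_hasSum (k : ℕ) (hk : 1 < k) (he : Even k) :
    HasSum (fun m : ℤ => 1 / (m:ℝ) ^ k) (2 * gZ k) := by
  have hs : Summable (fun m : ℤ => 1 / (m:ℝ) ^ k) := Real.summable_one_div_int_pow.mpr hk
  have h := hs.hasSum
  rw [tsum_int_split _ hs (by have : k ≠ 0 := by omega
                              simp [this])] at h
  push_cast at h
  simp only [he.neg_pow] at h
  rw [two_mul]
  exact h

lemma int_odd_hasSum (k : ℕ) (hk : 1 < k) (he : Odd k) :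
    HasSum (fun m : ℤ => 1 / (m:ℝ) ^ k) 0 := by
  have hs : Summable (fun m : ℤ => 1 / (m:ℝ) ^ k) := Real.summable_one_div_int_pow.mpr hk
  have h := hs.hasSum
  rw [tsum_int_split _ hs (by have : k ≠ 0 := by omega
                              simp [this])] at h
  push_cast at h
  simp only [he.neg_pow, div_neg, tsum_neg, add_neg_cancel] at h
  exact h

lemma hasSum_of {ι : Type*} {f g : ι → ℝ} {a b : ℝ} (h : HasSum f a) (hf : ∀ i, g i = f i)
    (hab : b = a) : HasSum g b := by
  have : g = f := funext hf
  rw [this, hab]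
  exact h

lemma gC_hasSum (n : ℕ) : HasSum (fun m : ℤ => gC m n)
    (19777 / 23328 * (1 / (n:ℝ) ^ 9) + if Even n then -128 / 243 * (1 / (n:ℝ) ^ 9) else 0) := by
  have h0 := hasSum_ite_eq (0:ℤ) (8281 / 23328 * (1 / (n:ℝ) ^ 9))
  have h1 := hasSum_ite_eq (-(n:ℤ)) (1 / 4 * (1 / (n:ℝ) ^ 9))
  have h2 := hasSum_ite_eq (-2 * (n:ℤ)) (1 / 4 * (1 / (n:ℝ) ^ 9))
  have h3 := hasSum_ite_eq (-3 * (n:ℤ)) (-7 / 972 * (1 / (n:ℝ) ^ 9))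
  have h4 : HasSum (fun m : ℤ => if 2 * m = -3 * (n:ℤ) then -128 / 243 * (1 / (n:ℝ) ^ 9) else 0)
      (if Even n then -128 / 243 * (1 / (n:ℝ) ^ 9) else 0) := by
    by_cases he : Even n
    · rw [if_pos he]
      obtain ⟨r, hr⟩ := he
      convert hasSum_ite_eq (-3 * (r:ℤ)) (-128 / 243 * (1 / (n:ℝ) ^ 9)) using 3
      rw [hr]
      push_cast
      omega
    · rw [if_neg he]
      have : ∀ m : ℤ, ¬ (2 * m = -3 * (n:ℤ)) := by
        intro m hm
        apply he
        rw [Nat.even_iff]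
        omega
      simp only [this, if_false]
      exact hasSum_zero
  have h := (((h0.add h1).add h2).add h3).add h4
  exact hasSum_of h (fun m => rfl) (by ring)

lemma gQ_hasSum (n : ℕ) (hn : n ≠ 0) : HasSum (fun m : ℤ => gG m n)
    (1 / 9 * gZ 4 * (1 / (n:ℝ) ^ 5) + 145 / 324 * gZ 2 * (1 / (n:ℝ) ^ 7)
      - (19777 / 23328 * (1 / (n:ℝ) ^ 9) + if Even n then -128 / 243 * (1 / (n:ℝ) ^ 9) else 0)) := by
  have h4 := (int_even_hasSum 4 (by norm_num) (by decide)).mul_left (1 / 18 * (1 / (n:ℝ) ^ 5))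
  have h3 := (int_odd_hasSum 3 (by norm_num) (by decide)).mul_left (5 / 36 * (1 / (n:ℝ) ^ 6))
  have h2 := (int_even_hasSum 2 (by norm_num) (by decide)).mul_left (145 / 648 * (1 / (n:ℝ) ^ 7))
  have f2 := gF_hasSum (2 * n)
  have f4 := (gF_hasSum (4 * n)).mul_left (1 / 8)
  have f6 := (gF_hasSum (6 * n)).mul_left (1 / 243)
  have f3 := (gF_hasSum (3 * n)).mul_left (128 / 243)
  have f := (((f2.add f4).sub f6).sub f3).mul_left (1 / (n:ℝ) ^ 8)
  have h := (((h4.sub h3).add h2).add f).sub (gC_hasSum n)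
  refine hasSum_of h ?_ ?_
  · intro m
    rw [gG_pf m n (by exact_mod_cast hn)]
    push_cast
    rfl
  · ring

lemma gEven_hasSum : HasSum (fun n : ℕ+ => if Even (n:ℕ) then (1 / ((n:ℕ):ℝ) ^ 9) else 0)
    (1 / 512 * gZ 9) := by
  have h := ((gZ_summable 9 (by norm_num)).hasSum).mul_left (1 / 512)
  have hinj : Function.Injective (fun n : ℕ+ => 2 * n) := fun a b hab => mul_left_cancel hab
  rw [← hinj.hasSum_iff]
  · refine hasSum_of h ?_ rfl
    intro n
    have e : ((2 * n : ℕ+) : ℕ) = 2 * (n:ℕ) := rfl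
    simp only [Function.comp, e, even_two, Even.mul_right, if_true]
    push_cast
    rw [mul_pow]
    field_simp
    norm_num
  · intro x hx
    rw [if_neg]
    intro he
    apply hx
    obtain ⟨r, hr⟩ := he
    have hr0 : 0 < r := by
      have := x.pos
      omega
    refine ⟨⟨r, hr0⟩, ?_⟩
    apply PNat.coe_injective
    change 2 * r = (x:ℕ)
    omega

set_option maxHeartbeats 1000000 in
lemma gG_main : 2 * ∑' (m : ℕ+) (n : ℕ+), gG (m:ℕ) (n:ℕ) =
    1 / 9 * gZ 4 * gZ 5 + 145 / 324 * gZ 2 * gZ 7 - 19753 / 23328 * gZ 9 := by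
  have hcast : Function.Injective (fun n : ℕ+ => ((n:ℕ):ℤ)) := fun a b hab => by
    apply PNat.coe_injective
    simpa using hab
  have hncast : Function.Injective (fun n : ℕ+ => -((n:ℕ):ℤ)) := fun a b hab => by
    apply PNat.coe_injective
    simpa using hab
  have hpp : Summable (fun p : ℕ+ × ℕ+ => gG (p.1:ℕ) (p.2:ℕ)) :=
    gG_summable.comp_injective (i := fun p : ℕ+ × ℕ+ => (((p.1:ℕ):ℤ), ((p.2:ℕ):ℤ)))
      (hcast.prodMap hcast)
  have hpn : Summable (fun p : ℕ+ × ℕ+ => gG (p.1:ℕ) (-(p.2:ℕ))) :=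
    gG_summable.comp_injective (i := fun p : ℕ+ × ℕ+ => (((p.1:ℕ):ℤ), (-((p.2:ℕ):ℤ))))
      (hcast.prodMap hncast)
  -- for fixed `m` the whole sum over `n` vanishes
  have hrow : ∀ m : ℕ+, ∑' n : ℕ+, gG (m:ℕ) (n:ℕ) = - ∑' n : ℕ+, gG (m:ℕ) (-(n:ℕ)) := by
    intro m
    have hs : Summable (fun n : ℤ => gG (m:ℕ) n) := gG_summable.prod_factor ((m:ℕ):ℤ)
    have h1 := tsum_int_split _ hs (gG_zero_right _)
    have h2 : ∑' n : ℤ, gG (m:ℕ) n = - ∑' n : ℤ, gG (m:ℕ) n := by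
      conv_lhs => rw [← (Equiv.subLeft (-((m:ℕ):ℤ))).tsum_eq]
      rw [← tsum_neg]
      congr 1
      ext n
      rw [Equiv.subLeft_apply, gG_refl]
    linarith
  have hA : ∑' (m : ℕ+) (n : ℕ+), gG (m:ℕ) (n:ℕ) = - ∑' (m : ℕ+) (n : ℕ+), gG (m:ℕ) (-(n:ℕ)) := by
    rw [← tsum_neg]
    exact tsum_congr hrow
  -- for fixed `n` the sum over all `m` is explicit
  have hcol : ∀ n : ℕ+, ∑' m : ℕ+, gG (m:ℕ) (n:ℕ) - ∑' m : ℕ+, gG (m:ℕ) (-(n:ℕ)) =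
      ∑' m : ℤ, gG m (n:ℕ) := by
    intro n
    have hs : Summable (fun m : ℤ => gG m (n:ℕ)) := (gQ_hasSum n n.ne_zero).summable
    rw [tsum_int_split _ hs (gG_zero_left _)]
    simp only [gG_neg, tsum_neg]
    ring
  have hc1 : ∑' (m : ℕ+) (n : ℕ+), gG (m:ℕ) (n:ℕ) = ∑' (n : ℕ+) (m : ℕ+), gG (m:ℕ) (n:ℕ) :=
    (Summable.tsum_comm hpp).symm
  have hc2 : ∑' (m : ℕ+) (n : ℕ+), gG (m:ℕ) (-(n:ℕ)) = ∑' (n : ℕ+) (m : ℕ+), gG (m:ℕ) (-(n:ℕ)) :=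
    (Summable.tsum_comm hpn).symm
  have hs1 : Summable (fun n : ℕ+ => ∑' m : ℕ+, gG (m:ℕ) (n:ℕ)) :=
    hpp.prod_symm.prod
  have hs2 : Summable (fun n : ℕ+ => ∑' m : ℕ+, gG (m:ℕ) (-(n:ℕ))) :=
    hpn.prod_symm.prod
  have htot : 2 * ∑' (m : ℕ+) (n : ℕ+), gG (m:ℕ) (n:ℕ) = ∑' (n : ℕ+), ∑' m : ℤ, gG m (n:ℕ) := by
    rw [← tsum_congr hcol, hs1.tsum_sub hs2, ← hc1, ← hc2]
    linarith
  rw [htot, tsum_congr (fun n : ℕ+ => (gQ_hasSum n n.ne_zero).tsum_eq)]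
  have z5 := ((gZ_summable 5 (by norm_num)).hasSum).mul_left (1 / 9 * gZ 4)
  have z7 := ((gZ_summable 7 (by norm_num)).hasSum).mul_left (145 / 324 * gZ 2)
  have z9 := ((gZ_summable 9 (by norm_num)).hasSum).mul_left (19777 / 23328)
  have ze := gEven_hasSum.mul_left (-128 / 243)
  have hz := (z5.add z7).sub (z9.add ze)
  simp only [mul_ite, mul_zero] at hz
  rw [hz.tsum_eq]
  change _ * gZ 5 + _ * gZ 7 - (_ * gZ 9 + _) = _
  ring

theorem zetaG2_411111 :
    (zetaG2 4 1 1 1 1 1 : ℂ) =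
      (1 / 18) * riemannZeta 4 * riemannZeta 5 + (145 / 648) * riemannZeta 2 * riemannZeta 7 - (19753 / 46656) * riemannZeta 9 := by
  have h : zetaG2 4 1 1 1 1 1 = ∑' (m : ℕ+) (n : ℕ+), gG (m:ℕ) (n:ℕ) := by
    simp only [zetaG2, gG, pow_one, Int.cast_natCast]
  have hm := gG_main
  rw [← h] at hm
  have hr : zetaG2 4 1 1 1 1 1 = 1 / 18 * gZ 4 * gZ 5 + 145 / 648 * gZ 2 * gZ 7
      - 19753 / 46656 * gZ 9 := by linarith
  have e2 := gZ_eq 2 (by norm_num)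
  have e4 := gZ_eq 4 (by norm_num)
  have e5 := gZ_eq 5 (by norm_num)
  have e7 := gZ_eq 7 (by norm_num)
  have e9 := gZ_eq 9 (by norm_num)
  push_cast at e2 e4 e5 e7 e9
  rw [hr]
  push_cast
  rw [e2, e4, e5, e7, e9]
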